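/- Let p, q ∈ (0,∞], r ∈ (0,p], l ∈ ℕ, α₃ ≥ 0, α₁, α₂ ∈ ℝ, σ₁, σ₂ ∈ (0,∞], and let {t_k} ∈ X̃^{α₃}_{α,σ,p} (i.e. {t_k} ∈ X^{α₃}_{α,σ,p} and t_k = t̄_k for all k). Then B̄^l_{p,q,r}(ℝⁿ,{t_k}) ⊂ B̃^l_{p,q,r}(ℝⁿ,{t_k}), and there is a constant C > 0, independent of φ, with ‖φ | B̃^l_{p,q,r}(ℝⁿ,{t_k})‖ ≤ C·‖φ | B̄^l_{p,q,r}(ℝⁿ,{t_k})‖ for all φ ∈ L_r^{loc}(ℝⁿ). -/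

import Mathlib

open MeasureTheory ENNReal Filter
open scoped Classical

noncomputable section

/-- `ℓ_q` quasinorm of a family of extended nonnegative reals (supremum when `q = ∞`). -/
def lqNorm {ι : Type*} (q : ℝ≥0∞) (c : ι → ℝ≥0∞) : ℝ≥0∞ :=
  if q = ∞ then ⨆ i, c i else (∑' i, c i ^ q.toReal) ^ (1 / q.toReal)

/-- `L_p` quasinorm of an `ℝ≥0∞`-valued function (essential supremum when `p = ∞`). -/
def lpNormE {α : Type*} [MeasurableSpace α] (p : ℝ≥0∞) (μ : Measure α) (f : α → ℝ≥0∞) : ℝ≥0∞ :=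
  if p = ∞ then essSup f μ else (∫⁻ x, f x ^ p.toReal ∂μ) ^ (1 / p.toReal)

abbrev Rn (n : ℕ) := Fin n → ℝ

/-- Open cube centred at `x` of half-side `s` (i.e. `x + s·Iⁿ`). -/
def openCube {n : ℕ} (x : Rn n) (s : ℝ) : Set (Rn n) := {y | ∀ i, |y i - x i| < s}

/-- Open axis-parallel cube with lower corner `c` and side `s`. -/
def cubeAt {n : ℕ} (c : Rn n) (s : ℝ) : Set (Rn n) := {x | ∀ i, c i < x i ∧ x i < c i + s}

/-- Open dyadic cube `Q^n_{k,m}` of side `2^{-k}`. -/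
def dyadicCube (n k : ℕ) (m : Fin n → ℤ) : Set (Rn n) :=
  {x | ∀ i, (m i : ℝ) / 2 ^ k < x i ∧ x i < ((m i : ℝ) + 1) / 2 ^ k}

/-- Half-open dyadic cube `Q̃^n_{k,m}`. -/
def dyadicCubeHalf (n k : ℕ) (m : Fin n → ℤ) : Set (Rn n) :=
  {x | ∀ i, (m i : ℝ) / 2 ^ k ≤ x i ∧ x i < ((m i : ℝ) + 1) / 2 ^ k}

def dyadicCenter (n k : ℕ) (m : Fin n → ℤ) : Rn n := fun i => ((m i : ℝ) + 1 / 2) / 2 ^ k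

/-- The concentric dilate `c·Q^n_{k,m}` of a dyadic cube. -/
def dilatedCube (n k : ℕ) (m : Fin n → ℤ) (c : ℝ) : Set (Rn n) :=
  openCube (dyadicCenter n k m) (c / 2 ^ (k + 1))

def euclNorm {d : ℕ} (y : Rn d) : ℝ := Real.sqrt (∑ i, y i ^ 2)

/-- The difference `Δ^l(h)g(x)`. -/
def diffl {n : ℕ} (l : ℕ) (h : Rn n) (g : Rn n → ℝ) (x : Rn n) : ℝ :=
  ∑ j ∈ Finset.range (l + 1), ((l.choose j : ℝ) * (-1 : ℝ) ^ (l + j)) * g (x + (j : ℝ) • h)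

/-- The difference `Δ^l(h,Ω)g(x)`, vanishing unless the segment `[x, x + l·h]` lies in `Ω`. -/
def difflOn {n : ℕ} (l : ℕ) (Ω : Set (Rn n)) (h : Rn n) (g : Rn n → ℝ) (x : Rn n) : ℝ :=
  if ∀ τ ∈ Set.Icc (0 : ℝ) 1, x + (τ * l) • h ∈ Ω then diffl l h g x else 0

/-- `δ^l_r(Q)g`, where `s` is the side length of the cube `Q`. -/
def deltaE (n l : ℕ) (r : ℝ≥0∞) (s : ℝ) (Q : Set (Rn n)) (g : Rn n → ℝ) : ℝ≥0∞ :=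
  ENNReal.ofReal s ^ (-(2 * (n : ℝ)) / r.toReal) *
    eLpNorm (fun hx : Rn n × Rn n => diffl l hx.1 g hx.2) r
      ((volume.restrict (openCube (0 : Rn n) s)).prod (volume.restrict Q))

/-- `δ^l_r(Q,Ω)g`, where `s` is the side length of the cube `Q`. -/
def deltaEOn (n l : ℕ) (r : ℝ≥0∞) (s : ℝ) (Q Ω : Set (Rn n)) (g : Rn n → ℝ) : ℝ≥0∞ :=
  ENNReal.ofReal s ^ (-(2 * (n : ℝ)) / r.toReal) *
    eLpNorm (fun hx : Rn n × Rn n => difflOn l Ω hx.1 g hx.2) r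
      ((volume.restrict (openCube (0 : Rn n) s)).prod (volume.restrict Q))

/-- `Δ̄^l_r(s)g(x)`. -/
def barDelta (n l : ℕ) (r : ℝ≥0∞) (s : ℝ) (g : Rn n → ℝ) (x : Rn n) : ℝ≥0∞ :=
  ENNReal.ofReal s ^ (-(n : ℝ) / r.toReal) *
    eLpNorm (fun h : Rn n => diffl l h g x) r (volume.restrict (openCube (0 : Rn n) s))

/-- Membership in `L_r^{loc}(ℝⁿ)`. -/
def MemLrLoc (n : ℕ) (r : ℝ≥0∞) (φ : Rn n → ℝ) : Prop :=
  Measurable φ ∧ ∀ K : Set (Rn n), IsCompact K → eLpNorm φ r (volume.restrict K) < ∞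

def IsWeight {n : ℕ} (w : Rn n → ℝ) : Prop := Measurable w ∧ ∀ x, 0 < w x

/-- A `p`-admissible weight sequence. -/
def pAdmissible (n : ℕ) (p : ℝ≥0∞) (t : ℕ → Rn n → ℝ) : Prop :=
  ∀ k, IsWeight (t k) ∧ MemLrLoc n p (t k)

/-- The multiple sequence `t_{k,m} = ‖t_k‖_{L_p(Q^n_{k,m})}` associated with a weight sequence. -/
def tkm (n : ℕ) (p : ℝ≥0∞) (t : ℕ → Rn n → ℝ) (k : ℕ) (m : Fin n → ℤ) : ℝ≥0∞ :=
  eLpNorm (t k) p (volume.restrict (dyadicCube n k m))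

/-- The weight `t̄_k` built from a multiple sequence `T`. -/
def tbarOf (n : ℕ) (p : ℝ≥0∞) (T : ℕ → (Fin n → ℤ) → ℝ≥0∞) (k : ℕ) (x : Rn n) : ℝ≥0∞ :=
  (2 : ℝ≥0∞) ^ (((k * n : ℕ) : ℝ) / p.toReal) *
    ∑' m : Fin n → ℤ, (dyadicCubeHalf n k m).indicator (fun _ => T k m) x

/-- `(2^{kn} ∫_Q f^e)^{1/e}`, with the essential supremum modification for `e = ∞`. -/
def avgNorm (n k : ℕ) (e : ℝ≥0∞) (Q : Set (Rn n)) (f : Rn n → ℝ≥0∞) : ℝ≥0∞ :=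
  if e = ∞ then essSup f (volume.restrict Q)
  else ((2 : ℝ≥0∞) ^ (k * n) * ∫⁻ x in Q, f x ^ e.toReal) ^ (1 / e.toReal)

/-- Conditions (2.14)–(2.16) of the class `X^{α₃}_{α,σ,p}`, expressed for a multiple
sequence `T`. -/
def MemXseq (n : ℕ) (α₁ α₂ α₃ : ℝ) (σ₁ σ₂ p : ℝ≥0∞) (T : ℕ → (Fin n → ℤ) → ℝ≥0∞) : Prop :=
  (∃ C₁ : ℝ≥0∞, 0 < C₁ ∧ C₁ < ∞ ∧ ∀ k j : ℕ, k ≤ j → ∀ m : Fin n → ℤ,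
    avgNorm n k p (dyadicCube n k m) (tbarOf n p T k) *
      avgNorm n k σ₁ (dyadicCube n k m) (fun x => (tbarOf n p T j x)⁻¹) ≤
      C₁ * (2 : ℝ≥0∞) ^ (α₁ * ((k : ℝ) - (j : ℝ)))) ∧
  (∃ C₂ : ℝ≥0∞, 0 < C₂ ∧ C₂ < ∞ ∧ ∀ k j : ℕ, k ≤ j → ∀ m : Fin n → ℤ,
    (avgNorm n k p (dyadicCube n k m) (tbarOf n p T k))⁻¹ *
      avgNorm n k σ₂ (dyadicCube n k m) (tbarOf n p T j) ≤
      C₂ * (2 : ℝ≥0∞) ^ (α₂ * ((j : ℝ) - (k : ℝ)))) ∧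
  (∀ k : ℕ, ∀ m m' : Fin n → ℤ, (∀ i, |m i - m' i| ≤ 1) →
    0 < T k m ∧ T k m ≤ (2 : ℝ≥0∞) ^ (α₃ : ℝ) * T k m')

/-- The weighted class `X^{α₃}_{α,σ,p}` of weight sequences. -/
def MemX (n : ℕ) (α₁ α₂ α₃ : ℝ) (σ₁ σ₂ p : ℝ≥0∞) (t : ℕ → Rn n → ℝ) : Prop :=
  pAdmissible n p t ∧ MemXseq n α₁ α₂ α₃ σ₁ σ₂ p (tkm n p t)

/-- Quasinorm of `B̃^l_{p,q,r}(ℝⁿ, T)` with an `ℝ≥0∞`-valued weight sequence `T`. -/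
def tildeBnormE (n l : ℕ) (p q r : ℝ≥0∞) (T : ℕ → Rn n → ℝ≥0∞) (φ : Rn n → ℝ) : ℝ≥0∞ :=
  lqNorm q (fun k : ℕ =>
    lpNormE p volume (fun x =>
      T (k + 1) x *
        deltaE n l r ((2 : ℝ) ^ (1 - ((k : ℤ) + 1))) (openCube x ((2 : ℝ) ^ (-((k : ℤ) + 1)))) φ)) +
  lpNormE p volume (fun x => T 0 x * eLpNorm φ r (volume.restrict (openCube x 1)))

/-- Quasinorm of `B̃^l_{p,q,r}(ℝⁿ, {t_k})`. -/
def tildeBnorm (n l : ℕ) (p q r : ℝ≥0∞) (t : ℕ → Rn n → ℝ) (φ : Rn n → ℝ) : ℝ≥0∞ :=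
  tildeBnormE n l p q r (fun k x => ENNReal.ofReal (t k x)) φ

/-- Membership in `B̃^l_{p,q,r}(ℝⁿ, {t_k})`. -/
def MemTildeB (n l : ℕ) (p q r : ℝ≥0∞) (t : ℕ → Rn n → ℝ) (φ : Rn n → ℝ) : Prop :=
  MemLrLoc n r φ ∧ tildeBnorm n l p q r t φ < ∞

/-- Quasinorm of `B̄^l_{p,q,r}(ℝⁿ, {t_k})`. -/
def barBnorm (n l : ℕ) (p q r : ℝ≥0∞) (t : ℕ → Rn n → ℝ) (φ : Rn n → ℝ) : ℝ≥0∞ :=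
  lqNorm q (fun k : ℕ =>
    lpNormE p volume (fun x =>
      ENNReal.ofReal (t (k + 1) x) * barDelta n l r ((2 : ℝ) ^ (-((k : ℤ) + 1))) φ x)) +
  lpNormE p volume (fun x => ENNReal.ofReal (t 0 x) * eLpNorm φ r (volume.restrict (openCube x 1)))

/-- Membership in `B̄^l_{p,q,r}(ℝⁿ, {t_k})`. -/
def MemBarB (n l : ℕ) (p q r : ℝ≥0∞) (t : ℕ → Rn n → ℝ) (φ : Rn n → ℝ) : Prop :=
  MemLrLoc n r φ ∧ barBnorm n l p q r t φ < ∞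

/-- The class `A^{loc}_∞`. -/
def MemAlocInfty (n : ℕ) (w : Rn n → ℝ) : Prop :=
  ∃ α : ℝ, α ∈ Set.Ioo (0 : ℝ) 1 ∧ ∃ M : ℝ≥0∞, M < ∞ ∧
    ∀ (c : Rn n) (s : ℝ), 0 < s → s ≤ 1 →
      ∀ F : Set (Rn n), F ⊆ cubeAt c s → MeasurableSet F →
        ENNReal.ofReal α * volume (cubeAt c s) ≤ volume F →
        (∫⁻ x in cubeAt c s, ENNReal.ofReal (w x)) ≤ M * ∫⁻ x in F, ENNReal.ofReal (w x)

/-- The class `A^{loc}_1`. -/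
def MemAloc1 (n : ℕ) (w : Rn n → ℝ) : Prop :=
  ∃ C : ℝ≥0∞, C < ∞ ∧ ∀ (c : Rn n) (s : ℝ), 0 < s → s ≤ 1 →
    ∀ᵐ x ∂volume.restrict (cubeAt c s),
      (∫⁻ y in cubeAt c s, ENNReal.ofReal (w y)) ≤ C * volume (cubeAt c s) * ENNReal.ofReal (w x)

/-- The class `A^{loc}_{p₀}` for `p₀ > 1`. -/
def MemAlocGt (n : ℕ) (p₀ : ℝ) (w : Rn n → ℝ) : Prop :=
  ∃ C : ℝ≥0∞, C < ∞ ∧ ∀ (c : Rn n) (s : ℝ), 0 < s → s ≤ 1 →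
    ((volume (cubeAt c s))⁻¹ * ∫⁻ y in cubeAt c s, ENNReal.ofReal (w y)) *
      ((volume (cubeAt c s))⁻¹ *
        ∫⁻ y in cubeAt c s, ENNReal.ofReal (w y) ^ (-(1 : ℝ) / (p₀ - 1))) ^ (p₀ - 1) ≤ C

/-- The class `A^{loc}_{p₀}` for `p₀ ∈ [1,∞)`. -/
def MemAlocP (n : ℕ) (p₀ : ℝ) (w : Rn n → ℝ) : Prop :=
  if p₀ = 1 then MemAloc1 n w else MemAlocGt n p₀ w

/-- The class `{}^{loc}Y^{α₃}_{α₁,α₂}` of weight sequences of variable smoothness. -/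
def MemLocY (n : ℕ) (α₁ α₂ α₃ : ℝ) (s : ℕ → Rn n → ℝ) : Prop :=
  (∀ k, IsWeight (s k)) ∧
  (∃ C : ℝ, 0 < C ∧ ∀ j k : ℕ, j ≤ k → ∀ x : Rn n,
    C⁻¹ * (2 : ℝ) ^ (α₁ * ((k : ℝ) - (j : ℝ))) ≤ s k x / s j x ∧
      s k x / s j x ≤ C * (2 : ℝ) ^ (α₂ * ((k : ℝ) - (j : ℝ)))) ∧
  (∀ k : ℕ, ∀ x y : Rn n, euclNorm (x - y) ≤ (2 : ℝ) ^ (-(k : ℤ)) →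
    s k x ≤ (2 : ℝ) ^ α₃ * s k y)

/-- The set `Ξ^{d,n}_{k,m} = Q^n_{k,m} × (2^{-k}B^d ∖ 2^{-k-1}B^d) ⊂ ℝ^{n+d}`. -/
def Xi (n d k : ℕ) (m : Fin n → ℤ) : Set (Rn (n + d)) :=
  {z | (fun i => z (Fin.castAdd d i)) ∈ dyadicCube n k m ∧
       euclNorm (fun i : Fin d => z (Fin.natAdd n i)) < (2 : ℝ) ^ (-(k : ℤ)) ∧
       (2 : ℝ) ^ (-(k : ℤ) - 1) ≤ euclNorm (fun i : Fin d => z (Fin.natAdd n i))}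

/-- The multiple sequence `γ̂_{k,m} = ‖γ‖_{L_p(Ξ^{d,n}_{k,m})}` generated by a weight `γ`. -/
def gammaHat (n d : ℕ) (p : ℝ≥0∞) (γ : Rn (n + d) → ℝ) (k : ℕ) (m : Fin n → ℤ) : ℝ≥0∞ :=
  eLpNorm γ p (volume.restrict (Xi n d k m))

def delta1Good (n d : ℕ) (p : ℝ≥0∞) (γ : Rn (n + d) → ℝ) (δ : ℝ) : Prop :=
  ∃ C : ℝ≥0∞, C < ∞ ∧ ∀ k j : ℕ, k ≤ j → ∀ m : Fin n → ℤ,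
    (∑' m' : {m' : Fin n → ℤ // dyadicCube n j m' ⊆ dyadicCube n k m},
        gammaHat n d p γ j m'.1 ^ p.toReal) ≤
      C * (2 : ℝ≥0∞) ^ ((((k : ℝ) - (j : ℝ)) * (d : ℝ)) * δ) * gammaHat n d p γ k m ^ p.toReal

/-- `δ₁(γ,n,d)`. -/
def delta1 (n d : ℕ) (p : ℝ≥0∞) (γ : Rn (n + d) → ℝ) : ℝ :=
  sSup {δ : ℝ | 0 < δ ∧ delta1Good n d p γ δ}

def delta2Good (n d : ℕ) (p : ℝ≥0∞) (γ : Rn (n + d) → ℝ) (δ : ℝ) : Prop :=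
  ∃ C : ℝ≥0∞, C < ∞ ∧ ∀ k j : ℕ, k ≤ j → ∀ m : Fin n → ℤ,
    ∀ G : Set (Fin n → ℤ), (∀ m' ∈ G, dyadicCube n j m' ⊆ dyadicCube n k m) →
      (∑' m' : G, gammaHat n d p γ j m'.1 ^ p.toReal) ≤
        C * (volume (⋃ m' ∈ G, dyadicCube n j m') / volume (dyadicCube n k m)) ^ δ *
          ∑' m' : {m' : Fin n → ℤ // dyadicCube n j m' ⊆ dyadicCube n k m},
            gammaHat n d p γ j m'.1 ^ p.toReal

/-- `δ₂(γ,n,d)`. -/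
def delta2 (n d : ℕ) (p : ℝ≥0∞) (γ : Rn (n + d) → ℝ) : ℝ :=
  sSup {δ : ℝ | 0 < δ ∧ delta2Good n d p γ δ}

/-- The cardinal B-spline of degree `deg` with knots `0, 1, …, deg + 1`. -/
def cardB : ℕ → ℝ → ℝ
  | 0, x => if 0 ≤ x ∧ x < 1 then 1 else 0
  | (d + 1), x => (x / (d + 1)) * cardB d x + (((d : ℝ) + 2 - x) / (d + 1)) * cardB d (x - 1)

/-- The tensor-product B-spline `N^{deg}_{k,m}` on `ℝⁿ`. -/
def Bspl (n deg k : ℕ) (m : Fin n → ℤ) (x : Rn n) : ℝ :=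
  ∏ i, cardB deg (2 ^ k * x i - (m i : ℝ))

/-- The spline `Σ_m β_m N^{deg}_{k,m}`. -/
def splineSum (n deg k : ℕ) (β : (Fin n → ℤ) → ℝ) (x : Rn n) : ℝ :=
  ∑' m, β m * Bspl n deg k m x

/-- A dyadic spline of degree `deg` (an element of `Σ^{deg} = ⋃_k Σ^{deg}_k`). -/
def IsSplineFn (n deg : ℕ) (S : Rn n → ℝ) : Prop :=
  ∃ (k : ℕ) (β : (Fin n → ℤ) → ℝ), S = splineSum n deg k β

/-- The weighted best spline approximation `s_k(φ)` by splines of degree `deg`. -/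
def sApprox (n deg : ℕ) (p r : ℝ≥0∞) (T : ℕ → (Fin n → ℤ) → ℝ≥0∞) (φ : Rn n → ℝ) (k : ℕ) :
    ℝ≥0∞ :=
  ⨅ β : (Fin n → ℤ) → ℝ,
    lqNorm p (fun m => T k m *
      eLpNorm (fun x => φ x - splineSum n deg k β x) r (volume.restrict (dyadicCube n k m)))

/-- `s_j(φ)` for `j ∈ {-1, 0, 1, 2, …}`, including the term `s_{-1}`. -/
def sApproxZ (n deg : ℕ) (p r : ℝ≥0∞) (T : ℕ → (Fin n → ℤ) → ℝ≥0∞) (φ : Rn n → ℝ) (j : ℤ) :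
    ℝ≥0∞ :=
  if j < 0 then
    lqNorm p (fun m => T 0 m * eLpNorm φ r (volume.restrict (dyadicCube n 0 m)))
  else sApprox n deg p r T φ j.toNat

/-- Local best polynomial approximation `E_l(φ,Q)_r` by polynomials of total degree `< l`. -/
def bestApproxE (n l : ℕ) (r : ℝ≥0∞) (φ : Rn n → ℝ) (Q : Set (Rn n)) : ℝ≥0∞ :=
  ⨅ P : {P : MvPolynomial (Fin n) ℝ // P.totalDegree < l},
    eLpNorm (fun x => φ x - MvPolynomial.eval x P.1) r (volume.restrict Q)

/-- The modulus of continuity `ω_l(φ,Q)_r`. -/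
def modulusE (n l : ℕ) (r : ℝ≥0∞) (φ : Rn n → ℝ) (Q : Set (Rn n)) : ℝ≥0∞ :=
  ⨆ h : Rn n, eLpNorm (difflOn l Q h φ) r (volume : Measure (Rn n))

def partialDeriv {N : ℕ} (i : Fin N) (ψ : Rn N → ℝ) : Rn N → ℝ :=
  fun x => fderiv ℝ ψ x (Pi.single i 1)

def iterPD {N : ℕ} : List (Fin N) → (Rn N → ℝ) → Rn N → ℝ
  | [], ψ => ψ
  | i :: L, ψ => partialDeriv i (iterPD L ψ)

def multiIdxList {N : ℕ} (α : Fin N → ℕ) : List (Fin N) :=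
  (List.finRange N).foldr (fun i L => List.replicate (α i) i ++ L) []

/-- Iterated partial derivative `D^α`. -/
def multiDeriv {N : ℕ} (α : Fin N → ℕ) (ψ : Rn N → ℝ) : Rn N → ℝ :=
  iterPD (multiIdxList α) ψ

/-- `g` is the weak (Sobolev) derivative `D^α f`. -/
def IsWeakDeriv {N : ℕ} (α : Fin N → ℕ) (f g : Rn N → ℝ) : Prop :=
  ∀ ψ : Rn N → ℝ, ContDiff ℝ (⊤ : ℕ∞) ψ → HasCompactSupport ψ →
    ∫ x, f x * multiDeriv α ψ x = (-1 : ℝ) ^ (∑ i, α i) * ∫ x, g x * ψ x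

/-- The weighted Sobolev norm `Σ_{|α| ≤ l} ‖γ · D^α f‖_{L_p}` computed from a system `D` of
weak derivatives. -/
def sobNorm (N : ℕ) (p : ℝ≥0∞) (l : ℕ) (γ : Rn N → ℝ) (D : (Fin N → ℕ) → Rn N → ℝ) : ℝ≥0∞ :=
  ∑' α : Fin N → ℕ,
    if (∑ i, α i) ≤ l then eLpNorm (fun x => γ x * D α x) p volume else 0

/-- Membership in the weighted Sobolev space `W^l_p(ℝ^N, γ)`, witnessed by the system `D`
of weak derivatives of `f`. -/
def MemW (N : ℕ) (p : ℝ≥0∞) (l : ℕ) (γ : Rn N → ℝ) (f : Rn N → ℝ)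
    (D : (Fin N → ℕ) → Rn N → ℝ) : Prop :=
  MeasureTheory.LocallyIntegrable f volume ∧ D 0 = f ∧
    (∀ α : Fin N → ℕ, (∑ i, α i) ≤ l →
      MeasureTheory.LocallyIntegrable (D α) volume ∧ IsWeakDeriv α f (D α)) ∧
    sobNorm N p l γ D < ∞

/-- `φ` is the trace of `f` on the plane `y = 0`. -/
def IsTraceSob {n d : ℕ} (f : Rn (n + d) → ℝ) (φ : Rn n → ℝ) : Prop :=
  ∃ f' : Rn (n + d) → ℝ, f' =ᵐ[volume] f ∧
    ∀ (c : Rn n) (s : ℝ), 0 < s →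
      Filter.Tendsto (fun y : Rn d => ∫ x in cubeAt c s, |f' (Fin.append x y) - φ x|)
        (nhds 0) (nhds 0)

/-- The weight sequence `γ_k(x) = 2^{k(l+n/p)} Σ_m χ_{Q̃^n_{k,m}}(x) γ̂_{k,m}`. -/
def gammaSeq (n d : ℕ) (p : ℝ≥0∞) (l : ℕ) (γ : Rn (n + d) → ℝ) (k : ℕ) (x : Rn n) : ℝ≥0∞ :=
  (2 : ℝ≥0∞) ^ ((k : ℝ) * ((l : ℝ) + (n : ℝ) / p.toReal)) *
    ∑' m : Fin n → ℤ, (dyadicCubeHalf n k m).indicator (fun _ => gammaHat n d p γ k m) x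

/-- Conjugate exponent in `ℝ≥0∞`. -/
def conjE (e : ℝ≥0∞) : ℝ≥0∞ := (1 - e⁻¹)⁻¹

/-- The exponent `p_θ`. -/
def pTheta (p θ : ℝ≥0∞) : ℝ≥0∞ := if θ = ∞ ∧ p = ∞ then 1 else p / θ

/-! Writing `τ_h` for the translation by `h`, `Δ_{2h} = (τ_h + 1) Δ_h`, hence
`Δ_{2h}^l = (τ_h + 1)^l Δ_h^l` and `|Δ_{2h}^l φ(x)| ≤ 2^l |Δ_h^l φ(x + jh)|` for some `j ≤ l`.
Under the substitutions `(h, y) ↦ (h/2, y + jh/2)`, which are linear with Jacobian `2^{-n}`, this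
bounds the mean `δ^l_r` over a cube of radius `a` by the `L_r` mean of `Δ̄^l_r(a)φ` over the
concentric cube of radius `(l + 1)a`. The weight varies by a bounded factor at scale `a`, so it may
be moved inside this mean; since `r ≤ p`, Hölder's inequality and Tonelli's theorem then bound the
`L_p` norm of the means by that of the function averaged. The powers of `a` cancel, so the constant
is the same at every dyadic scale and survives the `ℓ_q` sum. -/

section ForwardDifference

open fwdDiff_aux

variable {M G : Type*} [AddCommMonoid M]

lemma fwdDiff_iter_two_nsmul [AddCommGroup G] (l : ℕ) (h : M) (f : M → G) (x : M) :
    (fwdDiff (2 • h))^[l] f x =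
      ∑ j ∈ Finset.range (l + 1), l.choose j • (fwdDiff h)^[l] f (x + j • h) := by
  have factor : fwdDiffₗ M G (2 • h) = (shiftₗ M G h + 1) * fwdDiffₗ M G h := by
    ext f x
    simp [shiftₗ_apply, fwdDiff, two_nsmul, add_assoc]
  have commute : Commute (shiftₗ M G h + 1) (fwdDiffₗ M G h) :=
    ((Commute.refl _).add_left (Commute.one_left _)).add_left (Commute.one_left _)
  rw [← coe_fwdDiffₗ_pow, factor, commute.mul_pow, (Commute.one_right _).add_pow]
  simp [Module.End.mul_apply, LinearMap.sum_apply, shiftₗ_pow_apply, ← coe_fwdDiffₗ_pow,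
    ← (Nat.cast_commute _ _).eq]

lemma exists_enorm_fwdDiff_iter_two_nsmul_le [NormedAddCommGroup G] (l : ℕ) (h : M)
    (f : M → G) (x : M) :
    ∃ j : Fin (l + 1), ‖(fwdDiff (2 • h))^[l] f x‖ₑ ≤
      2 ^ l * ‖(fwdDiff h)^[l] f (x + (j : ℕ) • h)‖ₑ := by
  obtain ⟨j, hj⟩ :=
    Finite.exists_max fun j : Fin (l + 1) => ‖(fwdDiff h)^[l] f (x + (j : ℕ) • h)‖ₑ
  refine ⟨j, ?_⟩
  set m := ‖(fwdDiff h)^[l] f (x + (j : ℕ) • h)‖ₑ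
  calc ‖(fwdDiff (2 • h))^[l] f x‖ₑ
      ≤ ∑ i ∈ Finset.range (l + 1), ‖l.choose i • (fwdDiff h)^[l] f (x + i • h)‖ₑ := by
        rw [fwdDiff_iter_two_nsmul]
        exact enorm_sum_le _ _
    _ ≤ ∑ i ∈ Finset.range (l + 1), l.choose i * m := by
        refine Finset.sum_le_sum fun i hi => ?_
        have norm_le : ‖l.choose i • (fwdDiff h)^[l] f (x + i • h)‖ₑ ≤
            l.choose i * ‖(fwdDiff h)^[l] f (x + i • h)‖ₑ := by
          have := nnnorm_nsmul_le (n := l.choose i) (a := (fwdDiff h)^[l] f (x + i • h))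
          simp only [enorm_eq_nnnorm]
          exact_mod_cast this
        grw [norm_le, hj ⟨i, Finset.mem_range.1 hi⟩]
    _ = 2 ^ l * m := by
        rw [← Finset.sum_mul, ← Nat.cast_sum, Nat.sum_range_choose, Nat.cast_pow, Nat.cast_ofNat]

lemma measurable_fwdDiff_iter [MeasurableSpace M] [MeasurableAdd₂ M] [NormedAddCommGroup G]
    [MeasurableSpace G] [BorelSpace G] [SecondCountableTopology G] {f : M → G}
    (hf : Measurable f) (l : ℕ) :
    Measurable fun z : M × M => (fwdDiff z.1)^[l] f z.2 := by
  simp_rw [fwdDiff_iter_eq_sum_shift]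
  fun_prop

end ForwardDifference

section Lp

variable {α β ε : Type*} [MeasurableSpace α] [MeasurableSpace β]
  [TopologicalSpace ε] [ContinuousENorm ε] {μ : Measure α} {ν : Measure β} {p r : ℝ≥0∞}

lemma eLpNorm_le_eLpNorm_sum_map {ι : Type*} [Countable ι] {Φ : ι → α → β}
    (hΦ : ∀ i, Measurable (Φ i)) {f : β → ℝ≥0∞} (hf : Measurable f) {g : α → ε}
    (hgf : ∀ᵐ x ∂μ, ∃ i, ‖g x‖ₑ ≤ f (Φ i x)) :
    eLpNorm g r μ ≤ eLpNorm f r (Measure.sum fun i => μ.map (Φ i)) := by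
  rcases eq_or_ne r 0 with rfl | hr₀
  · simp
  rcases eq_or_ne r ∞ with rfl | hr
  · have ae_le : ∀ᵐ x ∂μ, ∀ i,
        f (Φ i x) ≤ eLpNormEssSup f (Measure.sum fun i => μ.map (Φ i)) :=
      ae_all_iff.2 fun i => ae_of_ae_map
        (p := (f · ≤ eLpNormEssSup f (Measure.sum fun i => μ.map (Φ i)))) (hΦ i).aemeasurable
        (Measure.ae_sum_iff.1 ae_le_eLpNormEssSup i)
    simp only [eLpNorm_exponent_top]
    refine essSup_le_of_ae_le _ ?_
    filter_upwards [hgf, ae_le] with x ⟨i, hi⟩ hle using hi.trans (hle i)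
  · simp only [eLpNorm_eq_lintegral_rpow_enorm_toReal hr₀ hr, enorm_eq_self]
    gcongr
    have measurable_comp (i) : Measurable fun x => f (Φ i x) ^ r.toReal :=
      (hf.comp (hΦ i)).pow_const _
    rw [lintegral_sum_measure, tsum_congr fun i => lintegral_map (hf.pow_const r.toReal) (hΦ i),
      ← lintegral_tsum fun i => (measurable_comp i).aemeasurable]
    refine lintegral_mono_ae (hgf.mono fun x ⟨i, hi⟩ => ?_)
    calc ‖g x‖ₑ ^ r.toReal ≤ f (Φ i x) ^ r.toReal := by gcongr
      _ ≤ ∑' i, f (Φ i x) ^ r.toReal := ENNReal.le_tsum i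

lemma measurable_eLpNorm_prod_left [SFinite μ] {f : α × β → ℝ≥0∞} (hf : Measurable f) :
    Measurable fun y => eLpNorm (fun x => f (x, y)) r μ := by
  rcases eq_or_ne r 0 with rfl | hr₀
  · simp
  rcases eq_or_ne r ∞ with rfl | hr
  · refine measurable_of_Iic fun c => ?_
    have sublevel : (fun y => eLpNorm (fun x => f (x, y)) ∞ μ) ⁻¹' Set.Iic c =
        {y | μ ((fun x => (x, y)) ⁻¹' {z | c < f z}) = 0} := by
      ext y
      have ae_le_iff : (∀ᵐ x ∂μ, f (x, y) ≤ c) ↔ μ {x | c < f (x, y)} = 0 := by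
        simp only [ae_iff, not_le]
      exact ⟨fun h => ae_le_iff.1 ((ae_le_eLpNormEssSup (f := fun x => f (x, y))).mono
        fun x hx => hx.trans h), fun h => essSup_le_of_ae_le c (ae_le_iff.2 h)⟩
    rw [sublevel]
    exact measurable_measure_prodMk_right (measurableSet_lt measurable_const hf)
      (measurableSet_singleton 0)
  · simp only [eLpNorm_eq_lintegral_rpow_enorm_toReal hr₀ hr, enorm_eq_self]
    exact (hf.pow_const _).lintegral_prod_left'.pow_const _

lemma eLpNorm_prod_le [SFinite μ] [SFinite ν] {f : α × β → ℝ≥0∞} (hf : Measurable f) :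
    eLpNorm f r (μ.prod ν) ≤ eLpNorm (fun y => eLpNorm (fun x => f (x, y)) r μ) r ν := by
  rcases eq_or_ne r 0 with rfl | hr₀
  · simp
  rcases eq_or_ne r ∞ with rfl | hr
  · set S := eLpNorm (fun y => eLpNorm (fun x => f (x, y)) ∞ μ) ∞ ν
    have ae_ae_le : ∀ᵐ y ∂ν, ∀ᵐ x ∂μ, f (x, y) ≤ S := by
      filter_upwards [ae_le_eLpNormEssSup (μ := ν)
        (f := fun y => eLpNorm (fun x => f (x, y)) ∞ μ)] with y hy
      exact (ae_le_eLpNormEssSup (f := fun x => f (x, y))).mono fun x hx => hx.trans hy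
    have measurableSet : MeasurableSet {z | f z ≤ S} := measurableSet_le hf measurable_const
    exact essSup_le_of_ae_le _ ((Measure.ae_prod_iff_ae_ae measurableSet).2
      ((Measure.ae_ae_comm (p := fun x y => f (x, y) ≤ S) measurableSet).2 ae_ae_le))
  · refine le_of_eq ?_
    have hr' : r.toReal ≠ 0 := (toReal_pos hr₀ hr).ne'
    simp only [eLpNorm_eq_lintegral_rpow_enorm_toReal hr₀ hr, enorm_eq_self, ← rpow_mul,
      one_div, inv_mul_cancel₀ hr', rpow_one]
    rw [lintegral_prod_symm' _ (hf.pow_const _)]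

lemma eLpNorm_le_mul_eLpNorm_of_ae_le {f g : α → ℝ≥0∞} {c : ℝ≥0∞} (hc : c ≠ ∞)
    (h : ∀ᵐ x ∂μ, f x ≤ c * g x) : eLpNorm f p μ ≤ c * eLpNorm g p μ := by
  lift c to NNReal using hc
  exact eLpNorm_le_nnreal_smul_eLpNorm_of_ae_le_mul' h p

lemma mul_eLpNorm_le_eLpNorm_mul {c : ℝ≥0∞} (hc : c ≠ ∞) (f : α → ℝ≥0∞) :
    c * eLpNorm f p μ ≤ eLpNorm (fun x => c * f x) p μ := by
  rcases eq_or_ne c 0 with rfl | hc₀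
  · simp
  · have cancel (x : α) : f x ≤ c⁻¹ * (c * f x) := by
      rw [← mul_assoc, ENNReal.inv_mul_cancel hc₀ hc, one_mul]
    grw [eLpNorm_le_mul_eLpNorm_of_ae_le (inv_ne_top.2 hc₀) (.of_forall cancel), ← mul_assoc,
      ENNReal.mul_inv_cancel hc₀ hc, one_mul]

end Lp

section Averaging

variable {X : Type*} [PseudoMetricSpace X] [SecondCountableTopology X] [MeasurableSpace X]
  [OpensMeasurableSpace X] {μ : Measure X} [SFinite μ] {b : ℝ} {V p r : ℝ≥0∞} {F : X → ℝ≥0∞}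

lemma lintegral_setLIntegral_ball_le (hV : ∀ x, μ (Metric.ball x b) ≤ V) (hF : Measurable F) :
    ∫⁻ x, ∫⁻ y in Metric.ball x b, F y ∂μ ∂μ ≤ V * ∫⁻ y, F y ∂μ := by
  have measurable_kernel :
      Measurable fun z : X × X => (Metric.ball z.1 b).indicator F z.2 :=
    (hF.comp measurable_snd).indicator (measurableSet_lt (measurable_snd.dist measurable_fst)
      measurable_const)
  calc ∫⁻ x, ∫⁻ y in Metric.ball x b, F y ∂μ ∂μ
      = ∫⁻ x, ∫⁻ y, (Metric.ball x b).indicator F y ∂μ ∂μ := by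
        simp only [lintegral_indicator Metric.isOpen_ball.measurableSet]
    _ = ∫⁻ y, ∫⁻ x, (Metric.ball x b).indicator F y ∂μ ∂μ :=
        lintegral_lintegral_swap measurable_kernel.aemeasurable
    _ = ∫⁻ y, ∫⁻ x, (Metric.ball y b).indicator (fun _ => F y) x ∂μ ∂μ := by
        simp only [Set.indicator_apply, Metric.mem_ball_comm]
    _ ≤ ∫⁻ y, V * F y ∂μ := by
        refine lintegral_mono fun y => ?_
        rw [lintegral_indicator_const Metric.isOpen_ball.measurableSet, mul_comm]
        gcongr
        exact hV y
    _ = V * ∫⁻ y, F y ∂μ := lintegral_const_mul _ hF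

lemma eLpNorm_eLpNorm_ball_self_le (hV : ∀ x, μ (Metric.ball x b) ≤ V) (hF : Measurable F) :
    eLpNorm (fun x => eLpNorm F p (μ.restrict (Metric.ball x b))) p μ ≤
      V ^ (1 / p.toReal) * eLpNorm F p μ := by
  rcases eq_or_ne p 0 with rfl | hp₀
  · simp
  rcases eq_or_ne p ∞ with rfl | hp
  · rw [toReal_top, _root_.div_zero, rpow_zero, one_mul, eLpNorm_exponent_top (μ := μ)]
    exact essSup_le_of_ae_le _ (.of_forall fun x => eLpNorm_mono_measure F Measure.restrict_le_self)
  · simp only [eLpNorm_eq_lintegral_rpow_enorm_toReal hp₀ hp, enorm_eq_self, ← rpow_mul,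
      one_div, inv_mul_cancel₀ (toReal_pos hp₀ hp).ne', rpow_one]
    rw [← mul_rpow_of_nonneg _ _ (by positivity)]
    gcongr
    exact lintegral_setLIntegral_ball_le hV (hF.pow_const _)

lemma eLpNorm_eLpNorm_ball_le (hV : ∀ x, μ (Metric.ball x b) ≤ V) (hV_top : V ≠ ∞)
    (hrp : r ≤ p) (hF : Measurable F) :
    eLpNorm (fun x => eLpNorm F r (μ.restrict (Metric.ball x b))) p μ ≤
      V ^ (1 / r.toReal) * eLpNorm F p μ := by
  rcases eq_or_ne r 0 with rfl | hr₀
  · simp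
  have exponent_nonneg : 0 ≤ 1 / r.toReal - 1 / p.toReal := by
    rw [sub_nonneg]
    rcases eq_or_ne p ∞ with rfl | hp
    · simp
    · exact one_div_le_one_div_of_le (toReal_pos hr₀ (ne_top_of_le_ne_top hp hrp))
        (toReal_mono hp hrp)
  have hölder (x : X) : eLpNorm F r (μ.restrict (Metric.ball x b)) ≤
      V ^ (1 / r.toReal - 1 / p.toReal) * eLpNorm F p (μ.restrict (Metric.ball x b)) := by
    grw [eLpNorm_le_eLpNorm_mul_rpow_measure_univ hrp hF.aestronglyMeasurable, mul_comm,
      Measure.restrict_apply_univ, hV x]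
  calc eLpNorm (fun x => eLpNorm F r (μ.restrict (Metric.ball x b))) p μ
      ≤ V ^ (1 / r.toReal - 1 / p.toReal) *
          eLpNorm (fun x => eLpNorm F p (μ.restrict (Metric.ball x b))) p μ :=
        eLpNorm_le_mul_eLpNorm_of_ae_le (rpow_ne_top_of_nonneg exponent_nonneg hV_top)
          (.of_forall hölder)
    _ ≤ V ^ (1 / r.toReal - 1 / p.toReal) * (V ^ (1 / p.toReal) * eLpNorm F p μ) := by
        gcongr
        exact eLpNorm_eLpNorm_ball_self_le hV hF
    _ = V ^ (1 / r.toReal) * eLpNorm F p μ := by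
        rw [← mul_assoc, ← rpow_add_of_nonneg _ _ exponent_nonneg (by positivity),
          sub_add_cancel]

end Averaging

section SlowlyVarying

open AffineMap Metric

/-- `w` is slowly varying at scale `δ` with constant `A`: moving by at most `δ` changes it by a
factor of at most `A`. -/
def SlowlyVarying {X : Type*} [PseudoMetricSpace X] (δ : ℝ) (A : ℝ≥0∞) (w : X → ℝ≥0∞) : Prop :=
  ∀ x y, dist x y ≤ δ → w x ≤ A * w y

lemma SlowlyVarying.le_pow_mul {E : Type*} [SeminormedAddCommGroup E] [NormedSpace ℝ E] {δ : ℝ}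
    {A : ℝ≥0∞} {w : E → ℝ≥0∞} (hw : SlowlyVarying δ A w) {N : ℕ} {x y : E}
    (hxy : dist x y ≤ (N + 1) * δ) : w x ≤ A ^ (N + 1) * w y := by
  induction N generalizing y with
  | zero => simpa using hw x y (by simpa using hxy)
  | succ N ih =>
    -- Split the segment from `x` to `y` in the ratio `N + 1 : 1`.
    set z := lineMap x y (((N : ℝ) + 1) / (N + 2))
    have hN : (0 : ℝ) < N + 2 := by positivity
    have dist_le : dist x y / (N + 2) ≤ δ := by
      rw [div_le_iff₀' hN]
      push_cast at hxy
      linarith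
    have hxz : dist x z ≤ (N + 1) * δ := by
      rw [dist_left_lineMap, Real.norm_of_nonneg (by positivity), div_mul_eq_mul_div, mul_div_assoc]
      gcongr
    have hzy : dist z y ≤ δ := by
      have ratio : 1 - ((N : ℝ) + 1) / (N + 2) = 1 / (N + 2) := by field_simp; ring
      rwa [dist_lineMap_right, ratio, Real.norm_of_nonneg (by positivity), one_div_mul_eq_div]
    calc w x ≤ A ^ (N + 1) * w z := ih hxz
      _ ≤ A ^ (N + 1) * (A * w y) := by gcongr; exact hw z y hzy
      _ = A ^ (N + 1 + 1) * w y := by ring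

lemma SlowlyVarying.mul_eLpNorm_ball_le {E : Type*} [SeminormedAddCommGroup E] [NormedSpace ℝ E]
    [MeasurableSpace E] [OpensMeasurableSpace E] {μ : Measure E} {δ : ℝ} {A r : ℝ≥0∞}
    {w : E → ℝ≥0∞} (hw : SlowlyVarying δ A w) (hA : A ≠ ∞) {x : E} (hx : w x ≠ ∞) (N : ℕ)
    (f : E → ℝ≥0∞) :
    w x * eLpNorm f r (μ.restrict (ball x ((N + 1) * δ))) ≤
      A ^ (N + 1) * eLpNorm (fun y => w y * f y) r (μ.restrict (ball x ((N + 1) * δ))) := by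
  refine (mul_eLpNorm_le_eLpNorm_mul hx f).trans
    (eLpNorm_le_mul_eLpNorm_of_ae_le (pow_ne_top hA) ?_)
  filter_upwards [ae_restrict_mem isOpen_ball.measurableSet] with y hy
  grw [hw.le_pow_mul (mem_ball'.1 hy).le, mul_assoc]

end SlowlyVarying

section ChangeOfVariables

open Metric

variable {E : Type*} [NormedAddCommGroup E] [NormedSpace ℝ E]

lemma mapsTo_half_shift_ball {j l : ℕ} (hj : j ≤ l) (x : E) (a : ℝ) :
    Set.MapsTo (fun z : E × E => ((2⁻¹ : ℝ) • z.1, z.2 + j • (2⁻¹ : ℝ) • z.1))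
      (ball 0 (2 * a) ×ˢ ball x a) (ball 0 a ×ˢ ball x ((l + 1) * a)) := by
  rintro ⟨h, y⟩ ⟨hh, hy⟩
  have norm_half : ‖(2⁻¹ : ℝ) • h‖ < a := by
    rw [norm_smul, Real.norm_of_nonneg (by norm_num)]
    linarith [mem_ball_zero_iff.1 hh]
  refine ⟨mem_ball_zero_iff.2 norm_half, mem_ball.2 ?_⟩
  calc dist (y + j • (2⁻¹ : ℝ) • h) x
      ≤ dist (y + j • (2⁻¹ : ℝ) • h) y + dist y x := dist_triangle _ _ _
    _ < l * a + a := by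
        refine add_lt_add_of_le_of_lt ?_ hy
        rw [dist_self_add_left]
        grw [norm_nsmul_le, hj, norm_half]
    _ = (l + 1) * a := by ring

variable [MeasurableSpace E] [BorelSpace E] {μ : Measure E}

lemma map_prod_smul_add [FiniteDimensional ℝ E] [μ.IsAddHaarMeasure] {c : ℝ} (hc : c ≠ 0)
    {g : E → E} (hg : Measurable g) :
    (μ.prod μ).map (fun z : E × E => (c • z.1, z.2 + g z.1)) =
      ENNReal.ofReal |(c ^ Module.finrank ℝ E)⁻¹| • μ.prod μ := by
  have smul : MeasurePreserving (c • ·) μ (ENNReal.ofReal |(c ^ Module.finrank ℝ E)⁻¹| • μ) :=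
    ⟨measurable_const_smul c, Measure.map_addHaar_smul μ hc⟩
  have shear := smul.skew_product (μc := μ) (μd := μ) (g := fun h y => y + g h)
    (measurable_snd.add (hg.comp measurable_fst))
    (.of_forall fun h => map_add_right_eq_self μ (g h))
  rw [shear.map_eq, Measure.prod_smul_left]

lemma map_restrict_le {α β : Type*} [MeasurableSpace α] [MeasurableSpace β] {ν : Measure α}
    {f : α → β} (hf : Measurable f) {s : Set α} {t : Set β} (ht : MeasurableSet t)
    (hst : Set.MapsTo f s t) : (ν.restrict s).map f ≤ (ν.map f).restrict t := by
  rw [Measure.restrict_map hf ht]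
  exact Measure.map_mono (Measure.restrict_mono hst le_rfl) hf

lemma sum_map_half_shift_le [FiniteDimensional ℝ E] [μ.IsAddHaarMeasure] (l : ℕ) (x : E)
    (a : ℝ) :
    (Measure.sum fun j : Fin (l + 1) =>
        ((μ.restrict (ball 0 (2 * a))).prod (μ.restrict (ball x a))).map
          fun z => ((2⁻¹ : ℝ) • z.1, z.2 + (j : ℕ) • (2⁻¹ : ℝ) • z.1)) ≤
      (((l + 1) * 2 ^ Module.finrank ℝ E : ℕ) : ℝ≥0∞) •
        (μ.restrict (ball 0 a)).prod (μ.restrict (ball x ((l + 1) * a))) := by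
  have jacobian : ENNReal.ofReal |((2⁻¹ : ℝ) ^ Module.finrank ℝ E)⁻¹| =
      2 ^ Module.finrank ℝ E := by
    rw [inv_pow, inv_inv, abs_of_nonneg (by positivity), ENNReal.ofReal_pow two_pos.le,
      ENNReal.ofReal_ofNat]
  have map_le (j : Fin (l + 1)) :
      ((μ.restrict (ball 0 (2 * a))).prod (μ.restrict (ball x a))).map
          (fun z => ((2⁻¹ : ℝ) • z.1, z.2 + (j : ℕ) • (2⁻¹ : ℝ) • z.1)) ≤
        (2 ^ Module.finrank ℝ E : ℝ≥0∞) •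
          (μ.restrict (ball 0 a)).prod (μ.restrict (ball x ((l + 1) * a))) := by
    rw [Measure.prod_restrict, Measure.prod_restrict, ← Measure.restrict_smul, ← jacobian,
      ← map_prod_smul_add (c := 2⁻¹) (g := fun h => (j : ℕ) • (2⁻¹ : ℝ) • h) (by norm_num)
        (by fun_prop)]
    exact map_restrict_le (by fun_prop) (isOpen_ball.prod isOpen_ball).measurableSet
      (mapsTo_half_shift_ball (Nat.lt_succ_iff.1 j.2) x a)
  rw [Measure.sum_fintype]
  refine (Finset.sum_le_card_nsmul _ _ _ fun j _ => map_le j).trans_eq ?_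
  rw [Finset.card_univ, Fintype.card_fin, ← Nat.cast_smul_eq_nsmul ℝ≥0∞, smul_smul]
  push_cast
  rfl

end ChangeOfVariables

section Averages

open Metric

variable {E G : Type*} [NormedAddCommGroup E] [MeasurableSpace E] [NormedAddCommGroup G]
  {μ : Measure E} {φ : E → G} {l : ℕ} {p r : ℝ≥0∞}

/-- The `L_r` norm of `h ↦ Δ_h^l φ(y)` over the steps `‖h‖ < a`: the unnormalised pointwise
mean `Δ̄^l_r(a)φ(y)`. -/
def fwdDiffNorm (μ : Measure E) (l : ℕ) (r : ℝ≥0∞) (a : ℝ) (φ : E → G) (y : E) : ℝ≥0∞ :=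
  eLpNorm (fun h => (fwdDiff h)^[l] φ y) r (μ.restrict (ball 0 a))

/-- The `L_r` norm of `(h, y) ↦ Δ_h^l φ(y)` over the steps `‖h‖ < s` and the points `y` of the
ball of radius `a` about `x`: the unnormalised mean `δ^l_r` on that ball. -/
def fwdDiffBallNorm (μ : Measure E) (l : ℕ) (r : ℝ≥0∞) (s a : ℝ) (φ : E → G) (x : E) : ℝ≥0∞ :=
  eLpNorm (fun z : E × E => (fwdDiff z.1)^[l] φ z.2) r
    ((μ.restrict (ball 0 s)).prod (μ.restrict (ball x a)))

variable [BorelSpace E] [MeasurableSpace G] [BorelSpace G] [SecondCountableTopology G]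

lemma measurable_fwdDiffNorm [SecondCountableTopology E] [SFinite μ] (hφ : Measurable φ) (a : ℝ) :
    Measurable (fwdDiffNorm μ l r a φ) := by
  simpa only [eLpNorm_enorm] using!
    measurable_eLpNorm_prod_left (μ := μ.restrict (ball 0 a)) (measurable_fwdDiff_iter hφ l).enorm

variable [NormedSpace ℝ E] [FiniteDimensional ℝ E] [μ.IsAddHaarMeasure]

lemma fwdDiffBallNorm_two_mul_le (hφ : Measurable φ) (a : ℝ) (x : E) :
    fwdDiffBallNorm μ l r (2 * a) a φ x ≤
      2 ^ l * (((l + 1) * 2 ^ Module.finrank ℝ E : ℕ) : ℝ≥0∞) ^ (1 / r.toReal) *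
        eLpNorm (fwdDiffNorm μ l r a φ) r (μ.restrict (ball x ((l + 1) * a))) := by
  set J := (((l + 1) * 2 ^ Module.finrank ℝ E : ℕ) : ℝ≥0∞)
  set f := fun z : E × E => ‖(fwdDiff z.1)^[l] φ z.2‖ₑ
  have hf : Measurable f := (measurable_fwdDiff_iter hφ l).enorm
  have doubling (z : E × E) : ∃ j : Fin (l + 1), ‖(fwdDiff z.1)^[l] φ z.2‖ₑ ≤
      2 ^ l * f ((2⁻¹ : ℝ) • z.1, z.2 + (j : ℕ) • (2⁻¹ : ℝ) • z.1) := by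
    have double_half : z.1 = 2 • (2⁻¹ : ℝ) • z.1 := by
      rw [← Nat.cast_smul_eq_nsmul ℝ, smul_smul]
      norm_num
    simpa only [← double_half] using
      exists_enorm_fwdDiff_iter_two_nsmul_le l ((2⁻¹ : ℝ) • z.1) φ z.2
  calc fwdDiffBallNorm μ l r (2 * a) a φ x
      ≤ eLpNorm (fun z => 2 ^ l * f z) r (Measure.sum fun j : Fin (l + 1) =>
          ((μ.restrict (ball 0 (2 * a))).prod (μ.restrict (ball x a))).map
            fun z => ((2⁻¹ : ℝ) • z.1, z.2 + (j : ℕ) • (2⁻¹ : ℝ) • z.1)) :=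
        eLpNorm_le_eLpNorm_sum_map (fun _ => by fun_prop) (hf.const_mul _) (.of_forall doubling)
    _ ≤ eLpNorm (fun z => 2 ^ l * f z) r
          (J • (μ.restrict (ball 0 a)).prod (μ.restrict (ball x ((l + 1) * a)))) :=
        eLpNorm_mono_measure _ (sum_map_half_shift_le l x a)
    _ ≤ 2 ^ l * eLpNorm f r
          (J • (μ.restrict (ball 0 a)).prod (μ.restrict (ball x ((l + 1) * a)))) :=
        eLpNorm_le_mul_eLpNorm_of_ae_le (by finiteness) (.of_forall fun _ => le_rfl)
    _ = 2 ^ l * J ^ (1 / r.toReal) * eLpNorm f r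
          ((μ.restrict (ball 0 a)).prod (μ.restrict (ball x ((l + 1) * a)))) := by
        rw [eLpNorm_smul_measure_of_ne_zero (by simp [J]), smul_eq_mul, mul_assoc, toReal_div,
          toReal_one]
    _ ≤ 2 ^ l * J ^ (1 / r.toReal) *
          eLpNorm (fwdDiffNorm μ l r a φ) r (μ.restrict (ball x ((l + 1) * a))) := by
        gcongr
        simpa only [f, eLpNorm_enorm] using! eLpNorm_prod_le hf

lemma eLpNorm_mul_fwdDiffBallNorm_le {a : ℝ} {A : ℝ≥0∞} {w : E → ℝ≥0∞}
    (hw : SlowlyVarying a A w) (hA : A ≠ ∞) (hw_top : ∀ x, w x ≠ ∞) (hw_meas : Measurable w)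
    (hrp : r ≤ p) (hφ : Measurable φ) :
    eLpNorm (fun x => w x * fwdDiffBallNorm μ l r (2 * a) a φ x) p μ ≤
      2 ^ l * A ^ (l + 1) *
        (((l + 1) * 2 ^ Module.finrank ℝ E : ℕ) * μ (ball 0 ((l + 1) * a))) ^ (1 / r.toReal) *
        eLpNorm (fun x => w x * fwdDiffNorm μ l r a φ x) p μ := by
  set V := μ (ball 0 ((l + 1) * a))
  set J := (((l + 1) * 2 ^ Module.finrank ℝ E : ℕ) : ℝ≥0∞)
  set c := 2 ^ l * A ^ (l + 1) * J ^ (1 / r.toReal)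
  have hc : c ≠ ∞ := by finiteness
  set F := fun y => w y * fwdDiffNorm μ l r a φ y
  have hF : Measurable F := hw_meas.mul (measurable_fwdDiffNorm hφ a)
  have pointwise (x : E) : w x * fwdDiffBallNorm μ l r (2 * a) a φ x ≤
      c * eLpNorm F r (μ.restrict (ball x ((l + 1) * a))) := by
    grw [fwdDiffBallNorm_two_mul_le hφ, mul_left_comm, hw.mul_eLpNorm_ball_le hA (hw_top x)]
    exact le_of_eq (by ring)
  calc eLpNorm (fun x => w x * fwdDiffBallNorm μ l r (2 * a) a φ x) p μ
      ≤ c * eLpNorm (fun x => eLpNorm F r (μ.restrict (ball x ((l + 1) * a)))) p μ :=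
        eLpNorm_le_mul_eLpNorm_of_ae_le hc (.of_forall pointwise)
    _ ≤ c * (V ^ (1 / r.toReal) * eLpNorm F p μ) := by
        gcongr
        exact eLpNorm_eLpNorm_ball_le (fun x => (μ.addHaar_ball_center x _).le)
          measure_ball_lt_top.ne hrp hF
    _ = 2 ^ l * A ^ (l + 1) * (J * V) ^ (1 / r.toReal) * eLpNorm F p μ := by
        rw [mul_rpow_of_nonneg _ _ (by positivity)]
        ring

end Averages

section Euclidean

open Metric

variable {n l : ℕ} {p q r : ℝ≥0∞}

lemma diffl_eq_fwdDiff_iter (l : ℕ) (h : Rn n) (g : Rn n → ℝ) (x : Rn n) :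
    diffl l h g x = (fwdDiff h)^[l] g x := by
  rw [diffl, fwdDiff_iter_eq_sum_shift]
  refine Finset.sum_congr rfl fun j hj => ?_
  have hjl : l + j = l - j + 2 * j := by
    have := Finset.mem_range_succ_iff.1 hj
    lia
  rw [hjl, pow_add, pow_mul, neg_one_sq, one_pow, mul_one, Nat.cast_smul_eq_nsmul, zsmul_eq_mul]
  push_cast
  ring

lemma openCube_eq_ball {s : ℝ} (hs : 0 < s) (x : Rn n) : openCube x s = ball x s := by
  ext y
  simp only [openCube, Set.mem_ofPred_eq, mem_ball, dist_pi_lt_iff hs, Real.dist_eq]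

lemma deltaE_openCube {s a : ℝ} (hs : 0 < s) (ha : 0 < a) (φ : Rn n → ℝ) (x : Rn n) :
    deltaE n l r s (openCube x a) φ =
      ENNReal.ofReal s ^ (-(2 * (n : ℝ)) / r.toReal) * fwdDiffBallNorm volume l r s a φ x := by
  simp only [deltaE, fwdDiffBallNorm, diffl_eq_fwdDiff_iter, openCube_eq_ball, hs, ha]

lemma barDelta_eq {s : ℝ} (hs : 0 < s) (φ : Rn n → ℝ) (x : Rn n) :
    barDelta n l r s φ x =
      ENNReal.ofReal s ^ (-(n : ℝ) / r.toReal) * fwdDiffNorm volume l r s φ x := by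
  simp only [barDelta, fwdDiffNorm, diffl_eq_fwdDiff_iter, openCube_eq_ball hs]

lemma lpNormE_eq_eLpNorm {α : Type*} [MeasurableSpace α] {μ : Measure α} (hp : p ≠ 0)
    (f : α → ℝ≥0∞) : lpNormE p μ f = eLpNorm f p μ := by
  by_cases hp_top : p = ∞
  · simp [lpNormE, hp_top, eLpNormEssSup]
  · simp [lpNormE, hp_top, eLpNorm_eq_lintegral_rpow_enorm_toReal hp hp_top]

lemma lqNorm_le_mul_lqNorm {ι : Type*} (hq : q ≠ 0) {c d : ι → ℝ≥0∞} {C : ℝ≥0∞}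
    (h : ∀ i, c i ≤ C * d i) : lqNorm q c ≤ C * lqNorm q d := by
  by_cases hq_top : q = ∞
  · simp only [lqNorm, hq_top, if_true]
    exact iSup_le fun i => (h i).trans (by gcongr; exact le_iSup d i)
  · have hq' : q.toReal ≠ 0 := (toReal_pos hq hq_top).ne'
    simp only [lqNorm, hq_top, if_false]
    calc (∑' i, c i ^ q.toReal) ^ (1 / q.toReal)
        ≤ (∑' i, C ^ q.toReal * d i ^ q.toReal) ^ (1 / q.toReal) := by
          gcongr with i
          rw [← mul_rpow_of_nonneg _ _ toReal_nonneg]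
          gcongr
          exact h i
      _ = C * (∑' i, d i ^ q.toReal) ^ (1 / q.toReal) := by
          rw [ENNReal.tsum_mul_left, mul_rpow_of_nonneg _ _ (by positivity), ← rpow_mul,
            mul_one_div_cancel hq', rpow_one]

lemma normalization_mul_volume {a : ℝ} (ha : 0 < a) :
    ENNReal.ofReal (2 * a) ^ (-(2 * (n : ℝ))) *
        (((l + 1) * 2 ^ n : ℕ) * volume (ball (0 : Rn n) ((l + 1) * a))) =
      (l + 1) ^ (n + 1) * ENNReal.ofReal a ^ (-(n : ℝ)) := by
  have real_identity : ((2 * a) ^ (2 * n))⁻¹ * (((l + 1) * 2 ^ n) * (2 * ((l + 1) * a)) ^ n) =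
      (l + 1) ^ (n + 1) * (a ^ n)⁻¹ := by
    simp only [mul_pow, pow_mul', pow_succ]
    field_simp
  have cast_pow : ((l : ℝ≥0∞) + 1) ^ (n + 1) = ENNReal.ofReal ((l + 1) ^ (n + 1)) := by
    rw [ENNReal.ofReal_pow (by positivity), ofReal_add (by positivity) zero_le_one,
      ofReal_natCast, ofReal_one]
  have ofReal_rpow_neg {s : ℝ} (hs : 0 < s) (m : ℕ) :
      ENNReal.ofReal s ^ (-(m : ℝ)) = ENNReal.ofReal (s ^ m)⁻¹ := by
    rw [ofReal_rpow_of_pos hs, Real.rpow_neg hs.le, Real.rpow_natCast]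
  have two_n : 2 * (n : ℝ) = (2 * n : ℕ) := by push_cast; rfl
  rw [two_n, ofReal_rpow_neg (by positivity), ofReal_rpow_neg ha, cast_pow, ← ofReal_natCast,
    Real.volume_pi_ball _ (by positivity), Fintype.card_fin, ← ofReal_mul (by positivity),
    ← ofReal_mul (by positivity), ← ofReal_mul (by positivity)]
  push_cast
  rw [real_identity]

lemma lpNormE_mul_deltaE_le {a : ℝ} (ha : 0 < a) {A : ℝ≥0∞} {w : Rn n → ℝ≥0∞}
    (hw : SlowlyVarying a A w) (hA : A ≠ ∞) (hw_top : ∀ x, w x ≠ ∞) (hw_meas : Measurable w)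
    (hp : p ≠ 0) (hrp : r ≤ p) {φ : Rn n → ℝ} (hφ : Measurable φ) :
    lpNormE p volume (fun x => w x * deltaE n l r (2 * a) (openCube x a) φ) ≤
      2 ^ l * A ^ (l + 1) * ((l + 1) ^ (n + 1)) ^ (1 / r.toReal) *
        lpNormE p volume (fun x => w x * barDelta n l r a φ x) := by
  set ρ := r.toReal
  set K := 2 ^ l * A ^ (l + 1)
  set JV := ((l + 1) * 2 ^ n : ℕ) * volume (ball (0 : Rn n) ((l + 1) * a))
  set S := eLpNorm (fun x => w x * fwdDiffNorm volume l r a φ x) p volume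
  have ofReal_rpow_ne_top {s : ℝ} (hs : 0 < s) (e : ℝ) : ENNReal.ofReal s ^ e ≠ ∞ :=
    rpow_ne_top_of_ne_zero (ofReal_pos.2 hs).ne' ofReal_ne_top
  have normalization : ENNReal.ofReal (2 * a) ^ (-(2 * (n : ℝ)) / ρ) * JV ^ (1 / ρ) =
      ((l + 1) ^ (n + 1)) ^ (1 / ρ) * ENNReal.ofReal a ^ (-(n : ℝ) / ρ) := by
    rw [← mul_one_div, rpow_mul, ← mul_rpow_of_nonneg _ _ (by positivity),
      normalization_mul_volume ha, mul_rpow_of_nonneg _ _ (by positivity), ← rpow_mul,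
      mul_one_div]
  simp only [lpNormE_eq_eLpNorm hp, deltaE_openCube (mul_pos two_pos ha) ha, barDelta_eq ha,
    mul_left_comm (w _)]
  calc eLpNorm (fun x => ENNReal.ofReal (2 * a) ^ (-(2 * (n : ℝ)) / ρ) *
          (w x * fwdDiffBallNorm volume l r (2 * a) a φ x)) p volume
      ≤ ENNReal.ofReal (2 * a) ^ (-(2 * (n : ℝ)) / ρ) *
          eLpNorm (fun x => w x * fwdDiffBallNorm volume l r (2 * a) a φ x) p volume :=
        eLpNorm_le_mul_eLpNorm_of_ae_le (ofReal_rpow_ne_top (mul_pos two_pos ha) _)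
          (.of_forall fun _ => le_rfl)
    _ ≤ ENNReal.ofReal (2 * a) ^ (-(2 * (n : ℝ)) / ρ) * (K * JV ^ (1 / ρ) * S) := by
        gcongr
        simpa only [Module.finrank_fin_fun] using
          eLpNorm_mul_fwdDiffBallNorm_le hw hA hw_top hw_meas hrp hφ
    _ = K * ((l + 1) ^ (n + 1)) ^ (1 / ρ) * (ENNReal.ofReal a ^ (-(n : ℝ) / ρ) * S) := by
        rw [← mul_assoc, mul_left_comm, normalization]
        ring
    _ ≤ K * ((l + 1) ^ (n + 1)) ^ (1 / ρ) * eLpNorm (fun x =>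
          ENNReal.ofReal a ^ (-(n : ℝ) / ρ) * (w x * fwdDiffNorm volume l r a φ x)) p volume := by
        grw [mul_eLpNorm_le_eLpNorm_mul (ofReal_rpow_ne_top ha _)]

end Euclidean

section Weights

lemma mem_dyadicCubeHalf_iff {n k : ℕ} {m : Fin n → ℤ} {x : Rn n} :
    x ∈ dyadicCubeHalf n k m ↔ m = fun i => ⌊x i * 2 ^ k⌋ := by
  simp only [dyadicCubeHalf, Set.mem_ofPred_eq, funext_iff, eq_comm (a := m _), Int.floor_eq_iff]
  refine forall_congr' fun i => ?_
  rw [div_le_iff₀ (by positivity), lt_div_iff₀ (by positivity)]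

lemma tbarOf_eq (n : ℕ) (p : ℝ≥0∞) (T : ℕ → (Fin n → ℤ) → ℝ≥0∞) (k : ℕ) (x : Rn n) :
    tbarOf n p T k x =
      2 ^ (((k * n : ℕ) : ℝ) / p.toReal) * T k fun i => ⌊x i * 2 ^ k⌋ := by
  simp only [tbarOf, Set.indicator_apply, mem_dyadicCubeHalf_iff, tsum_ite_eq]

lemma abs_floor_sub_floor_le_one {R : Type*} [Ring R] [LinearOrder R] [IsStrictOrderedRing R]
    [FloorRing R] {a b : R} (h : |a - b| ≤ 1) : |⌊a⌋ - ⌊b⌋| ≤ 1 := by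
  simp only [abs_sub_le_iff, sub_le_iff_le_add', ← Int.floor_add_one] at h ⊢
  exact ⟨Int.floor_mono h.1, Int.floor_mono h.2⟩

lemma slowlyVarying_tbarOf {n : ℕ} {p : ℝ≥0∞} {T : ℕ → (Fin n → ℤ) → ℝ≥0∞} {k : ℕ} {A : ℝ≥0∞}
    (hT : ∀ m m', (∀ i, |m i - m' i| ≤ 1) → T k m ≤ A * T k m') :
    SlowlyVarying (2 ^ (-(k : ℤ))) A (tbarOf n p T k) := by
  intro x y hxy
  have adjacent (i : Fin n) : |⌊x i * 2 ^ k⌋ - ⌊y i * 2 ^ k⌋| ≤ 1 := by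
    refine abs_floor_sub_floor_le_one ?_
    rw [← sub_mul, abs_mul, abs_of_nonneg (by positivity : (0 : ℝ) ≤ 2 ^ k)]
    calc |x i - y i| * 2 ^ k ≤ 2 ^ (-(k : ℤ)) * 2 ^ k := by
          gcongr
          exact (dist_le_pi_dist x y i).trans hxy
      _ = 1 := by simp
  rw [tbarOf_eq, tbarOf_eq, mul_left_comm]
  gcongr
  exact hT _ _ adjacent

end Weights

theorem barB_subset_tildeB_general (n l : ℕ) {p q r : ℝ≥0∞} (hq : 0 < q) (hr : 0 < r)
    (hrp : r ≤ p) {A : ℝ≥0∞} (hA : A ≠ ∞) {t : ℕ → Rn n → ℝ} (ht : ∀ k, Measurable (t k))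
    (ht_slow : ∀ k : ℕ, SlowlyVarying (2 ^ (-(k : ℤ))) A fun x => ENNReal.ofReal (t k x)) :
    ∃ C : ℝ≥0∞, 0 < C ∧ C < ∞ ∧ ∀ φ : Rn n → ℝ, Measurable φ →
      tildeBnorm n l p q r t φ ≤ C * barBnorm n l p q r t φ := by
  set C₀ := 2 ^ l * A ^ (l + 1) * ((l + 1) ^ (n + 1)) ^ (1 / r.toReal)
  have hC₀ : C₀ ≠ ∞ := by finiteness
  refine ⟨C₀ + 1, by positivity, by finiteness, fun φ hφ => ?_⟩
  have layer (k : ℕ) :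
      lpNormE p volume (fun x => ENNReal.ofReal (t (k + 1) x) *
        deltaE n l r (2 ^ (1 - ((k : ℤ) + 1))) (openCube x (2 ^ (-((k : ℤ) + 1)))) φ) ≤
      C₀ * lpNormE p volume (fun x => ENNReal.ofReal (t (k + 1) x) *
        barDelta n l r (2 ^ (-((k : ℤ) + 1))) φ x) := by
    have side : (2 : ℝ) ^ (1 - ((k : ℤ) + 1)) = 2 * 2 ^ (-((k : ℤ) + 1)) := by
      rw [sub_eq_add_neg, zpow_one_add₀ two_ne_zero]
    rw [side]
    exact lpNormE_mul_deltaE_le (by positivity) (by exact_mod_cast ht_slow (k + 1)) hA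
      (fun _ => ofReal_ne_top) (ht (k + 1)).ennreal_ofReal (hr.trans_le hrp).ne' hrp hφ
  grw [tildeBnorm, tildeBnormE, barBnorm, lqNorm_le_mul_lqNorm hq.ne' layer, mul_add]
  gcongr
  · exact le_self_add
  · exact le_mul_of_one_le_left' le_add_self

/-- **Lemma 2.5: `B̄^l_{p,q,r}(ℝⁿ,{t_k}) ⊂ B̃^l_{p,q,r}(ℝⁿ,{t_k})` for
`{t_k} ∈ X̃^{α₃}_{α,σ,p}` and `r ≤ p`.** -/
theorem barB_subset_tildeB (n l : ℕ) (hn : 0 < n) (hl : 0 < l) (p q r : ℝ≥0∞)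
    (hp : 0 < p) (hq : 0 < q) (hr : 0 < r) (hrp : r ≤ p) (α₁ α₂ α₃ : ℝ) (hα₃ : 0 ≤ α₃)
    (σ₁ σ₂ : ℝ≥0∞) (hσ₁ : 0 < σ₁) (hσ₂ : 0 < σ₂)
    (t : ℕ → Rn n → ℝ) (ht : MemX n α₁ α₂ α₃ σ₁ σ₂ p t)
    (htbar : ∀ k x, ENNReal.ofReal (t k x) = tbarOf n p (tkm n p t) k x) :
    ∃ C : ℝ≥0∞, 0 < C ∧ C < ∞ ∧ ∀ φ : Rn n → ℝ, MemLrLoc n r φ →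
      tildeBnorm n l p q r t φ ≤ C * barBnorm n l p q r t φ ∧
        (MemBarB n l p q r t φ → MemTildeB n l p q r t φ) := by
  obtain ⟨C, hC_pos, hC_top, hC⟩ := barB_subset_tildeB_general n l hq hr hrp
    (rpow_ne_top_of_ne_zero two_ne_zero ofNat_ne_top) (fun k => (ht.1 k).1.1) fun k => by
      simpa only [htbar] using slowlyVarying_tbarOf fun m m' h => (ht.2.2.2 k m m' h).2
  exact ⟨C, hC_pos, hC_top, fun φ hφ => ⟨hC φ hφ.1, fun hbar =>
    ⟨hφ, (hC φ hφ.1).trans_lt (mul_lt_top hC_top hbar.2)⟩⟩⟩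

end
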